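/- arXiv:math/9906016 — 3 statements merged into one kernel-verified Lean document; each statement's English description precedes it below -/
import Mathlib

section
/- Let (α,β) ∈ △ have triangle sequence (a_1, a_2, …) with associated numbers d_k, and suppose the sequence has not terminated through index k+1 (so d_{k-2}, d_{k-1}, d_k, d_{k+1} are all defined with d_{k-2}, d_{k-1}, d_k > 0). Then T(d_{k-1}/d_{k-2}, d_k/d_{k-2}) = (d_k/d_{k-1}, d_{k+1}/d_{k-1}). -/
/-- The triangle △ = {(x,y) : 1 ≥ x ≥ y > 0}. -/
def Tri : Set (ℝ × ℝ) := {p | p.1 ≤ 1 ∧ p.2 ≤ p.1 ∧ 0 < p.2}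

/-- The subtriangle △ₖ = {(x,y) ∈ △ : 1 - x - ky ≥ 0 > 1 - x - (k+1)y}. -/
def TriK (k : ℕ) : Set (ℝ × ℝ) :=
  {p | p ∈ Tri ∧ 0 ≤ 1 - p.1 - (k : ℝ) * p.2 ∧ 1 - p.1 - ((k : ℝ) + 1) * p.2 < 0}

/-- The triangle map T, on the piece △ₖ : T(α,β) = (β/α, (1-α-kβ)/α). -/
noncomputable def TmapK (k : ℕ) (p : ℝ × ℝ) : ℝ × ℝ :=
  (p.2 / p.1, (1 - p.1 - (k : ℝ) * p.2) / p.1)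

/-- The sequence of numbers d₋₂ = 1, d₋₁ = α, d₀ = β,
    d_k = d_{k-3} - d_{k-2} - a_k·d_{k-1}, shifted so that `triD α β n` is d_{n-2};
    here a_k is the nonnegative integer with
    d_{k-3} - d_{k-2} - a_k·d_{k-1} ≥ 0 > d_{k-3} - d_{k-2} - (a_k+1)·d_{k-1}
    (i.e. the floor of (d_{k-3} - d_{k-2})/d_{k-1}).  If some d_k = 0 the
    sequence (has terminated and) is continued by 0's. -/
noncomputable def triD (α β : ℝ) : ℕ → ℝ
  | 0 => 1
  | 1 => α
  | 2 => β
  | (k+3) =>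
    if 0 < triD α β (k+2) then
      triD α β k - triD α β (k+1) -
        ((⌊(triD α β k - triD α β (k+1)) / triD α β (k+2)⌋).toNat : ℝ) * triD α β (k+2)
    else 0

/-- The triangle sequence of (α,β): `triA α β n` is the term a_{n+1}, so that the
    triangle sequence (a₁, a₂, …) is (triA α β 0, triA α β 1, …). -/
noncomputable def triA (α β : ℝ) (k : ℕ) : ℕ :=
  (⌊(triD α β k - triD α β (k+1)) / triD α β (k+2)⌋).toNat

theorem floor_aux (x c : ℝ) (hx : 0 ≤ x) (hc : 0 < c) :
    0 ≤ x - ((⌊x / c⌋).toNat : ℝ) * c ∧ x - (((⌊x / c⌋).toNat : ℝ) + 1) * c < 0 := by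
  have h0 : 0 ≤ ⌊x / c⌋ := Int.floor_nonneg.mpr (div_nonneg hx hc.le)
  have h1 : ((⌊x / c⌋).toNat : ℝ) = (⌊x / c⌋ : ℝ) := by
    exact_mod_cast congrArg (Int.cast : ℤ → ℝ) (Int.toNat_of_nonneg h0)
  rw [h1]
  have h2 := (le_div_iff₀ hc).mp (Int.floor_le (x / c))
  have h3 := (div_lt_iff₀ hc).mp (Int.lt_floor_add_one (x / c))
  constructor <;> linarith

theorem triD_succ_three (α β : ℝ) (k : ℕ) (h : 0 < triD α β (k+2)) :
    triD α β (k+3) = triD α β k - triD α β (k+1) - (triA α β k : ℝ) * triD α β (k+2) := by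
  rw [triD, if_pos h, triA]

theorem triD_anti (α β : ℝ) (hmem : (α, β) ∈ Tri) (k : ℕ)
    (hpos : ∀ j, j ≤ k + 2 → 0 < triD α β j) :
    triD α β (k+1) ≤ triD α β k ∧ triD α β (k+2) ≤ triD α β (k+1) := by
  induction k with
  | zero =>
    obtain ⟨h1, h2, h3⟩ := hmem
    simp only [triD]
    exact ⟨h1, h2⟩
  | succ k ih =>
    obtain ⟨i1, i2⟩ := ih (fun j hj => hpos j (by omega))
    have hp := hpos (k+2) (by omega)
    refine ⟨i2, ?_⟩
    have h := (floor_aux (triD α β k - triD α β (k+1)) _ (by linarith) hp).2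
    have e := triD_succ_three α β k hp
    rw [triA] at e
    change triD α β (k+3) ≤ triD α β (k+2)
    linarith

/-- If the triangle sequence of (α,β) ∈ △ has not terminated through index k+1
(d_{k-2}, d_{k-1}, d_k > 0, with d_{k-2} = triD α β k etc.), then
T(d_{k-1}/d_{k-2}, d_k/d_{k-2}) = (d_k/d_{k-1}, d_{k+1}/d_{k-1}); here the point
(d_{k-1}/d_{k-2}, d_k/d_{k-2}) lies in the piece △_{a_{k+1}} of the domain of T. -/
theorem stmt_2 (α β : ℝ) (hmem : (α, β) ∈ Tri) (k : ℕ)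
    (hpos : ∀ j, j ≤ k + 2 → 0 < triD α β j) :
    (triD α β (k+1) / triD α β k, triD α β (k+2) / triD α β k) ∈ TriK (triA α β k) ∧
    TmapK (triA α β k) (triD α β (k+1) / triD α β k, triD α β (k+2) / triD α β k)
      = (triD α β (k+2) / triD α β (k+1), triD α β (k+3) / triD α β (k+1)) := by
  have p0 := hpos k (by omega)
  have p1 := hpos (k+1) (by omega)
  have p2 := hpos (k+2) le_rfl
  obtain ⟨i1, i2⟩ := triD_anti α β hmem k hpos
  obtain ⟨f1, f2⟩ := floor_aux (triD α β k - triD α β (k+1)) _ (by linarith) p2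
  have e := triD_succ_three α β k p2
  change 0 ≤ _ - (triA α β k : ℝ) * _ at f1
  change _ - ((triA α β k : ℝ) + 1) * _ < 0 at f2
  rw [e]
  generalize (triA α β k) = n at *
  generalize triD α β k = a at *
  generalize triD α β (k+1) = b at *
  generalize triD α β (k+2) = c at *
  have key : ∀ t : ℝ, 1 - b / a - t * (c / a) = (a - b - t * c) / a := by
    intro t
    field_simp
  refine ⟨⟨⟨?_, ?_, ?_⟩, ?_, ?_⟩, ?_⟩
  · exact (div_le_one p0).mpr i1
  · exact div_le_div_of_nonneg_right i2 p0.le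
  · exact div_pos p2 p0
  · change 0 ≤ 1 - b / a - (n : ℝ) * (c / a)
    rw [key]
    exact div_nonneg f1 p0.le
  · change 1 - b / a - ((n : ℝ) + 1) * (c / a) < 0
    rw [key]
    exact div_neg_of_neg_of_pos f2 p0
  · simp only [TmapK]
    rw [key, div_div_div_cancel_right₀ (ne_of_gt p0), div_div_div_cancel_right₀ (ne_of_gt p0)]
end

section
/- For every nonnegative integer k, the polynomial x³ + k·x² + x - 1 has a real root α with 0 < α < 1, and for any such root the pair (α, α²) lies in △_k and satisfies T(α, α²) = (α, α²); consequently the triangle sequence of (α, α²) is the purely periodic sequence (k, k, k, …). -/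
lemma floor_aux_s13 (k : ℕ) (α : ℝ) (h0 : 0 < α) (h1 : α < 1)
    (h : α ^ 3 + (k : ℝ) * α ^ 2 + α - 1 = 0) (n : ℕ) :
    (⌊(α ^ n - α ^ (n + 1)) / α ^ (n + 2)⌋).toNat = k := by
  have e : (α ^ n - α ^ (n + 1)) / α ^ (n + 2) = α + k := by
    rw [div_eq_iff (by positivity)]
    linear_combination (-α ^ n) * h
  have f : ⌊(α ^ n - α ^ (n + 1)) / α ^ (n + 2)⌋ = (k : ℤ) := by
    rw [e, Int.floor_eq_iff]
    push_cast
    constructor <;> linarith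
  rw [f]
  simp

lemma triD_aux (k : ℕ) (α : ℝ) (h0 : 0 < α) (h1 : α < 1)
    (h : α ^ 3 + (k : ℝ) * α ^ 2 + α - 1 = 0) (n : ℕ) :
    triD α (α ^ 2) n = α ^ n ∧ triD α (α ^ 2) (n + 1) = α ^ (n + 1) ∧
      triD α (α ^ 2) (n + 2) = α ^ (n + 2) := by
  induction n with
  | zero => simp [triD]
  | succ n ih =>
    obtain ⟨a, b, c⟩ := ih
    refine ⟨b, c, ?_⟩
    have hp : 0 < α ^ (n + 2) := by positivity
    change triD α (α ^ 2) (n + 3) = α ^ (n + 3)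
    rw [triD, a, b, c, if_pos hp, floor_aux_s13 k α h0 h1 h n]
    linear_combination (-α ^ n) * h

/-- For every nonnegative integer k, the polynomial x³ + kx² + x - 1 has a real root α
with 0 < α < 1, and for any such root the pair (α, α²) lies in △ₖ and is a fixed point
of T; consequently the triangle sequence of (α, α²) is nonterminating and purely
periodic of the form (k, k, k, …). -/
theorem stmt_13 (k : ℕ) :
    (∃ α : ℝ, 0 < α ∧ α < 1 ∧ α ^ 3 + (k : ℝ) * α ^ 2 + α - 1 = 0) ∧
    ∀ α : ℝ, 0 < α → α < 1 → α ^ 3 + (k : ℝ) * α ^ 2 + α - 1 = 0 →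
      (α, α ^ 2) ∈ TriK k ∧
      TmapK k (α, α ^ 2) = (α, α ^ 2) ∧
      (∀ j, 0 < triD α (α ^ 2) j) ∧
      ∀ n, triA α (α ^ 2) n = k := by
  constructor
  · have hc : ContinuousOn (fun x : ℝ => x ^ 3 + (k : ℝ) * x ^ 2 + x - 1) (Set.Icc 0 1) := by
      fun_prop
    have hk : (0 : ℝ) ≤ k := Nat.cast_nonneg k
    obtain ⟨x, hx, hx'⟩ := intermediate_value_Ioo (zero_le_one' ℝ) hc
      (show (0 : ℝ) ∈ _ by constructor <;> norm_num; linarith)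
    exact ⟨x, hx.1, hx.2, hx'⟩
  · intro α h0 h1 h
    have hD := triD_aux k α h0 h1 h
    have h2 : 0 < α ^ 2 := by positivity
    refine ⟨⟨⟨h1.le, ?_, h2⟩, ?_, ?_⟩, ?_, ?_, ?_⟩
    · change α ^ 2 ≤ α
      nlinarith
    · change 0 ≤ 1 - α - (k : ℝ) * α ^ 2
      have : 0 < α ^ 3 := by positivity
      linarith
    · change 1 - α - ((k : ℝ) + 1) * α ^ 2 < 0
      nlinarith
    · ext
      · change α ^ 2 / α = α
        field_simp
      · change (1 - α - (k : ℝ) * α ^ 2) / α = α ^ 2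
        rw [div_eq_iff h0.ne']
        linear_combination -h
    · intro j
      rw [(hD j).1]
      positivity
    · intro n
      rw [triA, (hD n).1, (hD n).2.1, (hD n).2.2]
      exact floor_aux_s13 k α h0 h1 h n
end

section
/- Let (α,β) ∈ △ have a nonterminating triangle sequence (a_1, a_2, …) that is eventually periodic (i.e., there exist N ≥ 1 and p ≥ 1 with a_{k+p} = a_k for all k ≥ N). Then α and β are each algebraic over ℚ of degree at most three, and moreover α ∈ ℚ(β) or β ∈ ℚ(α). -/
/-- A nonnegative solution of the recurrence is decreasing. -/
lemma tri_anti (a : ℕ → ℕ) (z : ℕ → ℝ) (hz : ∀ n, 0 ≤ z n)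
    (hr : ∀ n, z n = z (n+1) + (a n : ℝ) * z (n+2) + z (n+3)) (n : ℕ) : z (n+1) ≤ z n := by
  have h1 := hr n
  have h2 : 0 ≤ (a n : ℝ) * z (n+2) := mul_nonneg (Nat.cast_nonneg _) (hz _)
  have h3 := hz (n+3)
  linarith

/-- For bounded partial quotients consecutive terms are comparable. -/
lemma tri_comp (a : ℕ → ℕ) (A : ℕ) (hA : ∀ n, a n ≤ A) (z : ℕ → ℝ) (hz : ∀ n, 0 ≤ z n)
    (hr : ∀ n, z n = z (n+1) + (a n : ℝ) * z (n+2) + z (n+3)) (n : ℕ) :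
    z n ≤ ((A : ℝ) + 2) * z (n+1) := by
  have h1 := hr n
  have m1 := tri_anti a z hz hr (n+1)
  have m2 := tri_anti a z hz hr (n+2)
  have hAn : (a n : ℝ) ≤ A := by exact_mod_cast hA n
  have h2 : (a n : ℝ) * z (n+2) ≤ A * z (n+1) :=
    mul_le_mul hAn m1 (hz _) (Nat.cast_nonneg _)
  simp only [add_assoc] at *
  norm_num at *
  linarith

/-- Two positive solutions of the recurrence are proportional. -/
lemma tri_unique (a : ℕ → ℕ) (A : ℕ) (hA : ∀ n, a n ≤ A) (x y : ℕ → ℝ)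
    (hx : ∀ n, 0 < x n) (hy : ∀ n, 0 < y n)
    (hrx : ∀ n, x n = x (n+1) + (a n : ℝ) * x (n+2) + x (n+3))
    (hry : ∀ n, y n = y (n+1) + (a n : ℝ) * y (n+2) + y (n+3)) :
    ∃ t : ℝ, ∀ n, x n = t * y n := by
  have hbdd : BddBelow (Set.range fun n => x n / y n) :=
    ⟨0, by rintro _ ⟨n, rfl⟩; exact (div_pos (hx n) (hy n)).le⟩
  obtain ⟨t, ht⟩ : ∃ t : ℝ, t = ⨅ n, x n / y n := ⟨_, rfl⟩
  have hz : ∀ n, 0 ≤ x n - t * y n := by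
    intro n
    have h1 : t ≤ x n / y n := ht ▸ ciInf_le hbdd n
    rw [le_div_iff₀ (hy n)] at h1
    linarith
  obtain ⟨z, hzdef⟩ : ∃ z : ℕ → ℝ, ∀ n, z n = x n - t * y n := ⟨_, fun _ => rfl⟩
  have hz0 : ∀ n, 0 ≤ z n := fun n => by rw [hzdef]; exact hz n
  have hrz : ∀ n, z n = z (n+1) + (a n : ℝ) * z (n+2) + z (n+3) := by
    intro n
    simp only [hzdef]
    have h1 := hrx n
    have h2 := hry n
    linear_combination h1 - t * h2
  have hza := tri_anti a z hz0 hrz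
  have hzm : Antitone z := antitone_nat_of_succ_le hza
  refine ⟨t, ?_⟩
  rcases (hz0 0).eq_or_lt with h0 | h0
  · intro n
    have h1 := hzm (Nat.zero_le n)
    have h2 := hz0 n
    have h3 := hzdef n
    linarith
  exfalso
  obtain ⟨c, hc⟩ : ∃ c : ℝ, c = z 0 / y 0 := ⟨_, rfl⟩
  have hcpos : 0 < c := hc ▸ div_pos h0 (hy 0)
  have key : ∀ n, c * y n ≤ z n ∨ c * y (n+1) ≤ z (n+1) ∨ c * y (n+2) ≤ z (n+2) := by
    intro n
    induction n with
    | zero =>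
      left
      rw [hc, div_mul_cancel₀ _ (hy 0).ne']
    | succ n ih =>
      by_contra hcon
      simp only [not_or, not_le, add_assoc] at hcon
      norm_num at hcon
      obtain ⟨h1, h2, h3⟩ := hcon
      rcases ih with h | h | h
      · have e1 := hrz n
        have e2 := hry n
        have h4 : (a n : ℝ) * z (n+2) ≤ a n * (c * y (n+2)) :=
          mul_le_mul_of_nonneg_left h2.le (Nat.cast_nonneg _)
        rw [e1, e2] at h
        nlinarith
      · linarith
      · linarith
  have hB : (1:ℝ) ≤ (A:ℝ) + 2 := by
    have : (0:ℝ) ≤ A := Nat.cast_nonneg _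
    linarith
  have hBpos : (0:ℝ) < (A:ℝ) + 2 := by linarith
  have hlow : ∀ n, c / ((A:ℝ)+2)^2 * y n ≤ z n := by
    intro n
    have y1 := tri_comp a A hA y (fun n => (hy n).le) hry n
    have y2 := tri_comp a A hA y (fun n => (hy n).le) hry (n+1)
    have z1 := hza n
    have z2 := hza (n+1)
    have hq : y n ≤ ((A:ℝ)+2)^2 * y (n+2) := by
      have := mul_le_mul_of_nonneg_left y2 hBpos.le
      calc y n ≤ _ := y1
        _ ≤ _ := this
        _ = _ := by ring
    have hq1 : y n ≤ ((A:ℝ)+2)^2 * y (n+1) := by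
      have : ((A:ℝ)+2) * y (n+1) ≤ ((A:ℝ)+2)^2 * y (n+1) := by
        apply mul_le_mul_of_nonneg_right _ (hy _).le
        nlinarith
      linarith
    have hq0 : y n ≤ ((A:ℝ)+2)^2 * y n := by
      have := hy n
      have : (1:ℝ) ≤ ((A:ℝ)+2)^2 := by nlinarith
      nlinarith
    have fin : ∀ w, y n ≤ ((A:ℝ)+2)^2 * w → c / ((A:ℝ)+2)^2 * y n ≤ c * w := by
      intro w hw
      rw [div_mul_eq_mul_div, div_le_iff₀ (by positivity)]
      calc c * y n ≤ c * (((A:ℝ)+2)^2 * w) := mul_le_mul_of_nonneg_left hw hcpos.le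
        _ = _ := by ring
    rcases key n with h | h | h
    · exact (fin _ hq0).trans h
    · exact (fin _ hq1).trans (h.trans z1)
    · exact (fin _ hq).trans (h.trans (z2.trans z1))
  have hε : 0 < c / ((A:ℝ)+2)^2 := by positivity
  have : t + c / ((A:ℝ)+2)^2 ≤ ⨅ n, x n / y n := by
    apply le_ciInf
    intro n
    rw [le_div_iff₀ (hy n)]
    have h1 := hlow n
    rw [hzdef] at h1
    linarith
  linarith

/-- Signed version: a real solution scaled by `μ` over each period is a multiple of a positive
solution with the same scaling. -/
lemma tri_unique_signed (a : ℕ → ℕ) (A : ℕ) (hA : ∀ n, a n ≤ A) (p : ℕ) (hp : 1 ≤ p) (μ : ℝ)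
    (hμ : 0 < μ) (e w : ℕ → ℝ) (he : ∀ n, 0 < e n)
    (hre : ∀ n, e n = e (n+1) + (a n : ℝ) * e (n+2) + e (n+3))
    (hrw : ∀ n, w n = w (n+1) + (a n : ℝ) * w (n+2) + w (n+3))
    (hpe : ∀ n, e (n+p) = μ * e n) (hpw : ∀ n, w (n+p) = μ * w n) :
    ∃ c : ℝ, ∀ n, w n = c * e n := by
  obtain ⟨C, hC⟩ : ∃ C : ℝ, ∀ n < p, |w n| / e n ≤ C := by
    obtain ⟨C, hC⟩ := ((Finset.range p).image fun n => |w n| / e n).bddAbove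
    exact ⟨C, fun n hn => hC (by
      simp only [Finset.coe_image, Set.mem_image]
      exact ⟨n, by simpa using hn, rfl⟩)⟩
  have hb : ∀ n, |w n| ≤ C * e n := by
    intro n
    induction n using Nat.strong_induction_on with
    | _ n ih =>
      by_cases hn : n < p
      · exact (div_le_iff₀ (he n)).1 (hC n hn)
      · obtain ⟨m, rfl⟩ : ∃ m, n = m + p := ⟨n - p, by omega⟩
        have := ih m (by omega)
        rw [hpe, hpw, abs_mul, abs_of_pos hμ]
        calc μ * |w m| ≤ μ * (C * e m) := mul_le_mul_of_nonneg_left this hμ.le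
          _ = _ := by ring
  obtain ⟨t, ht⟩ := tri_unique a A hA (fun n => (C+1) * e n + w n) e
    (fun n => by
      have h1 := neg_le_of_abs_le (hb n)
      have h2 := he n
      linarith) he
    (fun n => by
      have h1 := hre n
      have h2 := hrw n
      linear_combination (C+1) * h1 + h2) hre
  refine ⟨t - (C+1), fun n => ?_⟩
  have := ht n
  linear_combination this

/-- The terms of the sequence, divided by the first one, lie in `ℚ(μ)`. -/
lemma tri_ratio_mem (a : ℕ → ℕ) (A : ℕ) (hA : ∀ n, a n ≤ A) (p : ℕ) (hp : 1 ≤ p) (μ : ℝ)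
    (hμ : 0 < μ) (e : ℕ → ℝ) (he : ∀ n, 0 < e n)
    (hre : ∀ n, e n = e (n+1) + (a n : ℝ) * e (n+2) + e (n+3))
    (hpe : ∀ n, e (n+p) = μ * e n) (n : ℕ) :
    e n / e 0 ∈ IntermediateField.adjoin ℚ ({μ} : Set ℝ) := by
  obtain ⟨K, hK⟩ : ∃ K, K = IntermediateField.adjoin ℚ ({μ} : Set ℝ) := ⟨_, rfl⟩
  have hμK : μ ∈ K := by
    rw [hK]; exact IntermediateField.mem_adjoin_simple_self ℚ μ
  rw [← hK]
  obtain ⟨φ, hφ⟩ : ∃ φ : Module.Dual K ℝ, φ (e 0) ≠ 0 := by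
    by_contra hcon
    push Not at hcon
    exact (he 0).ne' ((Module.forall_dual_apply_eq_zero_iff K (e 0)).1 hcon)
  obtain ⟨c, hc⟩ := tri_unique_signed a A hA p hp μ hμ e (fun n => ((φ (e n) : K) : ℝ)) he hre
    (fun n => by
      have h1 : e n = e (n+1) + (a n) • e (n+2) + e (n+3) := by
        rw [nsmul_eq_mul]; exact hre n
      have h2 := congrArg (fun r => ((φ r : K) : ℝ)) h1
      simp only [map_add, map_nsmul] at h2
      simpa using h2) hpe
    (fun n => by
      have h1 : e (n+p) = (⟨μ, hμK⟩ : K) • e n := hpe n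
      have h2 := congrArg (fun r => ((φ r : K) : ℝ)) h1
      simpa using h2)
  have h0 := hc 0
  have hn := hc n
  have hφ' : ((φ (e 0) : K) : ℝ) ≠ 0 := by simpa using hφ
  have hc0 : c ≠ 0 := by
    rintro rfl
    simp only [zero_mul] at h0
    exact hφ' h0
  have : e n / e 0 = ((φ (e n) : K) : ℝ) / ((φ (e 0) : K) : ℝ) := by
    rw [h0, hn, mul_div_mul_left _ _ hc0]
  rw [this]
  exact K.div_mem (φ (e n)).2 (φ (e 0)).2

/-- The scaling factor is a root of a nonzero rational polynomial of degree at most three. -/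
lemma tri_mu_alg (a : ℕ → ℕ) (p : ℕ) (μ : ℝ) (e : ℕ → ℝ) (he : ∀ n, 0 < e n)
    (hre : ∀ n, e n = e (n+1) + (a n : ℝ) * e (n+2) + e (n+3))
    (hpe : ∀ n, e (n+p) = μ * e n) :
    ∃ f : Polynomial ℚ, f ≠ 0 ∧ f.degree ≤ 3 ∧ Polynomial.aeval μ f = 0 := by
  obtain ⟨S, hS⟩ : ∃ S : Submodule ℚ ℝ,
    S = Submodule.span ℚ (Set.range ![e 0, e 1, e 2]) := ⟨_, rfl⟩
  have hfin : Module.Finite ℚ S := by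
    rw [hS]; exact Module.Finite.span_of_finite ℚ (Set.finite_range _)
  have hrank : Module.finrank ℚ S ≤ 3 := by
    rw [hS]
    exact (finrank_range_le_card (R := ℚ) ![e 0, e 1, e 2]).trans (by simp)
  have hmem : ∀ n, e n ∈ S ∧ e (n+1) ∈ S ∧ e (n+2) ∈ S := by
    intro n
    induction n with
    | zero =>
      rw [hS]
      exact ⟨Submodule.subset_span ⟨0, rfl⟩, Submodule.subset_span ⟨1, rfl⟩,
        Submodule.subset_span ⟨2, rfl⟩⟩
    | succ n ih =>
      refine ⟨ih.2.1, ih.2.2, ?_⟩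
      have h : e (n+3) = e n - e (n+1) - (a n) • e (n+2) := by
        rw [nsmul_eq_mul]; linarith [hre n]
      change e (n+3) ∈ S
      rw [h]
      exact S.sub_mem (S.sub_mem ih.1 ih.2.1) (S.nsmul_mem ih.2.2 _)
  have hpow : ∀ k : ℕ, μ ^ k * e 0 ∈ S := by
    intro k
    have : e (k * p) = μ ^ k * e 0 := by
      induction k with
      | zero => simp
      | succ k ih => rw [Nat.succ_mul, hpe, ih]; ring
    rw [← this]
    exact (hmem _).1
  have hnli : ¬ LinearIndependent ℚ (fun k : Fin 4 => (⟨μ ^ (k:ℕ) * e 0, hpow k⟩ : S)) := by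
    intro h
    have := h.fintype_card_le_finrank
    simp at this
    omega
  rw [Fintype.not_linearIndependent_iff] at hnli
  obtain ⟨g, hg, i, hi⟩ := hnli
  refine ⟨∑ k : Fin 4, Polynomial.monomial (k:ℕ) (g k), ?_, ?_, ?_⟩
  · intro h0
    have := congrArg (fun q => Polynomial.coeff q (i:ℕ)) h0
    simp [Polynomial.finsetSum_coeff, Polynomial.coeff_monomial, Fin.val_inj] at this
    exact hi this
  · refine (Polynomial.degree_sum_le _ _).trans (Finset.sup_le fun k _ => ?_)
    refine (Polynomial.degree_monomial_le _ _).trans ?_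
    have : (k:ℕ) ≤ 3 := by omega
    exact_mod_cast this
  · have h1 := congrArg (fun s : S => (s : ℝ)) hg
    simp only [Submodule.coe_sum, Submodule.coe_smul, Submodule.coe_zero, Algebra.smul_def,
      ← mul_assoc] at h1
    rw [← Finset.sum_mul] at h1
    have h2 := (mul_eq_zero.1 h1).resolve_right (he 0).ne'
    simpa [map_sum, Polynomial.aeval_monomial] using h2

/-- The field-theoretic conclusion. -/
lemma tri_field (μ : ℝ) (hf : ∃ f : Polynomial ℚ, f ≠ 0 ∧ f.degree ≤ 3 ∧ Polynomial.aeval μ f = 0)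
    (α β : ℝ) (hα : α ∈ IntermediateField.adjoin ℚ ({μ} : Set ℝ))
    (hβ : β ∈ IntermediateField.adjoin ℚ ({μ} : Set ℝ)) :
    (∃ f : Polynomial ℚ, f ≠ 0 ∧ f.degree ≤ 3 ∧ Polynomial.aeval α f = 0) ∧
    (∃ g : Polynomial ℚ, g ≠ 0 ∧ g.degree ≤ 3 ∧ Polynomial.aeval β g = 0) ∧
    (α ∈ IntermediateField.adjoin ℚ ({β} : Set ℝ) ∨
      β ∈ IntermediateField.adjoin ℚ ({α} : Set ℝ)) := by
  obtain ⟨f, hf0, hfd, hfr⟩ := hf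
  have hint : IsIntegral ℚ μ := IsAlgebraic.isIntegral ⟨f, hf0, hfr⟩
  obtain ⟨K, hK⟩ : ∃ K, K = IntermediateField.adjoin ℚ ({μ} : Set ℝ) := ⟨_, rfl⟩
  have hfin : FiniteDimensional ℚ K := by
    rw [hK]; exact IntermediateField.adjoin.finiteDimensional hint
  have hrank : Module.finrank ℚ K ≤ 3 := by
    rw [hK, IntermediateField.adjoin.finrank hint]
    have h1 := Polynomial.natDegree_le_of_dvd (minpoly.dvd ℚ μ hfr) hf0
    exact h1.trans (Polynomial.natDegree_le_of_degree_le hfd)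
  rw [← hK] at hα hβ
  have halg : ∀ x ∈ K, IsIntegral ℚ x ∧ (minpoly ℚ x).natDegree ∣ Module.finrank ℚ K := by
    intro x hx
    have hxi : IsIntegral ℚ x := by
      have := IsIntegral.of_finite ℚ (⟨x, hx⟩ : K)
      exact this.map K.val
    refine ⟨hxi, ?_⟩
    rw [← IntermediateField.adjoin.finrank hxi]
    exact IntermediateField.finrank_dvd_of_le_right
      (IntermediateField.adjoin_simple_le_iff.2 hx)
  have hpol : ∀ x ∈ K, ∃ f : Polynomial ℚ, f ≠ 0 ∧ f.degree ≤ 3 ∧ Polynomial.aeval x f = 0 := by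
    intro x hx
    obtain ⟨h1, h2⟩ := halg x hx
    refine ⟨minpoly ℚ x, minpoly.ne_zero h1, ?_, minpoly.aeval ℚ x⟩
    have h3 := (Nat.le_of_dvd Module.finrank_pos h2).trans hrank
    exact Polynomial.degree_le_of_natDegree_le h3
  refine ⟨hpol α hα, hpol β hβ, ?_⟩
  obtain ⟨h1, h2⟩ := halg α hα
  rw [← IntermediateField.adjoin.finrank h1] at h2
  have hle : IntermediateField.adjoin ℚ ({α} : Set ℝ) ≤ K :=
    IntermediateField.adjoin_simple_le_iff.2 hα
  by_cases hone : Module.finrank ℚ (IntermediateField.adjoin ℚ ({α} : Set ℝ)) = 1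
  · left
    have := IntermediateField.finrank_adjoin_simple_eq_one_iff.1 hone
    exact (bot_le : (⊥ : IntermediateField ℚ ℝ) ≤ _) this
  · right
    have heq : Module.finrank ℚ (IntermediateField.adjoin ℚ ({α} : Set ℝ))
        = Module.finrank ℚ K := by
      have hpos : 0 < Module.finrank ℚ K := Module.finrank_pos
      generalize Module.finrank ℚ (IntermediateField.adjoin ℚ ({α} : Set ℝ)) = r at *
      generalize Module.finrank ℚ K = s at *
      have := Nat.le_of_dvd hpos h2
      interval_cases s <;> interval_cases r <;> simp_all
    rw [IntermediateField.eq_of_le_of_finrank_eq hle heq]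
    exact hβ

/-- If (α,β) ∈ △ has a nonterminating, eventually periodic triangle sequence, then α
and β are algebraic over ℚ of degree at most three, and α ∈ ℚ(β) or β ∈ ℚ(α). -/
theorem stmt_15 (α β : ℝ) (hmem : (α, β) ∈ Tri) (hnt : ∀ k, 0 < triD α β k)
    (hper : ∃ N p : ℕ, 1 ≤ p ∧ ∀ n, N ≤ n → triA α β (n + p) = triA α β n) :
    (∃ f : Polynomial ℚ, f ≠ 0 ∧ f.degree ≤ 3 ∧ Polynomial.aeval α f = 0) ∧
    (∃ g : Polynomial ℚ, g ≠ 0 ∧ g.degree ≤ 3 ∧ Polynomial.aeval β g = 0) ∧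
    (α ∈ IntermediateField.adjoin ℚ ({β} : Set ℝ) ∨
      β ∈ IntermediateField.adjoin ℚ ({α} : Set ℝ)) := by
  obtain ⟨N, p, hp, hper⟩ := hper
  have hrec : ∀ n, triD α β n = triD α β (n+1) + (triA α β n : ℝ) * triD α β (n+2)
      + triD α β (n+3) := by
    intro n
    have h : triD α β (n+3) = triD α β n - triD α β (n+1)
        - (triA α β n : ℝ) * triD α β (n+2) := by
      rw [triD, if_pos (hnt (n+2))]
      rfl
    rw [h]; ring
  obtain ⟨a, ha⟩ : ∃ a : ℕ → ℕ, ∀ n, a n = triA α β (n + N) := ⟨_, fun _ => rfl⟩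
  obtain ⟨e, hedef⟩ : ∃ e : ℕ → ℝ, ∀ n, e n = triD α β (n + N) := ⟨_, fun _ => rfl⟩
  have hap : ∀ n, a (n+p) = a n := by
    intro n
    rw [ha, ha, ← hper (n+N) (by omega)]
    congr 1; omega
  have he : ∀ n, 0 < e n := fun n => by rw [hedef]; exact hnt _
  have hre : ∀ n, e n = e (n+1) + (a n : ℝ) * e (n+2) + e (n+3) := by
    intro n
    rw [hedef, hedef, hedef, hedef, ha, hrec (n+N)]
    have h1 : n + N + 1 = n + 1 + N := by omega
    have h2 : n + N + 2 = n + 2 + N := by omega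
    have h3 : n + N + 3 = n + 3 + N := by omega
    rw [h1, h2, h3]
  obtain ⟨A, hA⟩ : ∃ A, ∀ n, a n ≤ A := by
    refine ⟨(Finset.range p).sup a, fun n => ?_⟩
    induction n using Nat.strong_induction_on with
    | _ n ih =>
      by_cases hn : n < p
      · exact Finset.le_sup (by simpa using hn)
      · obtain ⟨m, rfl⟩ : ∃ m, n = m + p := ⟨n - p, by omega⟩
        rw [hap]
        exact ih m (by omega)
  obtain ⟨μ, hpe⟩ := tri_unique a A hA (fun n => e (n+p)) e (fun n => he _) he
    (fun n => by
      have h := hre (n+p)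
      rw [hap] at h
      have h1 : n + p + 1 = n + 1 + p := by omega
      have h2 : n + p + 2 = n + 2 + p := by omega
      have h3 : n + p + 3 = n + 3 + p := by omega
      rw [h1, h2, h3] at h
      exact h) hre
  have hμ : 0 < μ := by
    have h1 := hpe 0
    have h2 := he (0+p)
    rw [h1] at h2
    exact pos_of_mul_pos_left h2 (he 0).le
  have hK := tri_ratio_mem a A hA p hp μ hμ e he hre hpe
  have hmu := tri_mu_alg a p μ e he hre hpe
  obtain ⟨K, hKdef⟩ : ∃ K, K = IntermediateField.adjoin ℚ ({μ} : Set ℝ) := ⟨_, rfl⟩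
  rw [← hKdef] at hK
  have hall : ∀ j, j ≤ N → ∀ n, N - j ≤ n → triD α β n / e 0 ∈ K := by
    intro j
    induction j with
    | zero =>
      intro _ n hn
      obtain ⟨m, rfl⟩ : ∃ m, n = m + N := ⟨n - N, by omega⟩
      rw [← hedef]
      exact hK m
    | succ j ih =>
      intro hj n hn
      by_cases hn' : N - j ≤ n
      · exact ih (by omega) n hn'
      · have i1 := ih (by omega) (n+1) (by omega)
        have i2 := ih (by omega) (n+2) (by omega)
        have i3 := ih (by omega) (n+3) (by omega)
        have : triD α β n / e 0 = triD α β (n+1) / e 0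
            + (triA α β n : ℝ) * (triD α β (n+2) / e 0) + triD α β (n+3) / e 0 := by
          rw [hrec n]; ring
        rw [this]
        exact K.add_mem (K.add_mem i1 (K.mul_mem (natCast_mem K _) i2)) i3
  have hd : ∀ n, triD α β n ∈ K := by
    intro n
    have h0 := hall N le_rfl 0 (by omega)
    have hn := hall N le_rfl n (by omega)
    have h1 : triD α β 0 = 1 := by rw [triD]
    have : triD α β n = (triD α β n / e 0) / (triD α β 0 / e 0) := by
      have := (he 0).ne'
      rw [h1]; field_simp
    rw [this]
    exact K.div_mem hn h0
  have hα := hd 1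
  have hβ := hd 2
  rw [triD] at hα
  rw [triD] at hβ
  rw [hKdef] at hα hβ
  exact tri_field μ hmu α β hα hβ
end
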